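/- Let μ : [0,∞) → [0,1] be nonincreasing with ∫₀^t μ(s) ds ≤ K·log(1+t) for all t > 0 and some K > 0, and suppose the limit lim_{r → ∞} (1/r)∫₀^∞ μ(s)^{1 + 1/r} ds = A exists. Then ω(g) = A for every linear functional ω on L∞((0,∞)) which is positive (ω(f) ≥ 0 whenever f ≥ 0 a.e.), satisfies ess liminf_{t → +∞} f(t) ≤ ω(f) ≤ ess limsup_{t → +∞} f(t) for every real-valued f ∈ L∞((0,∞)), and is dilation invariant: ω(f(·/c)) = ω(f) for every c > 0; here g(t) = (1/log(1+t))∫₀^t μ(s) ds for t > 0. -/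

import Mathlib

open Filter MeasureTheory

/-- A function is (everywhere) bounded. -/
def BddFun (f : ℝ → ℝ) : Prop := ∃ C : ℝ, ∀ x, |f x| ≤ C

/-- `g(t) = (1/log(1+t)) ∫₀^t μ(s) ds` for `t > 0` (and `0` for `t ≤ 0`). -/
noncomputable def gFn (μ : ℝ → ℝ) : ℝ → ℝ := fun t =>
  if 0 < t then (∫ s in (0:ℝ)..t, μ s) / Real.log (1 + t) else 0

/-!
Fix `r` and put the measure `μ ds / r` on `(0, ∞)`. The hypothesis, taken at `r / (n + 1)`, says
that the integral of `x ^ (n + 1)`, with `x = μ ^ (1 / r)`, tends to `A / (n + 1) = A ∫₀¹ y ^ n dy`.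
By Weierstrass approximation the integral of `x q(x)` tends to `A ∫₀¹ q` for every continuous `q`,
and, squeezing, also for the function `q` equal to `1 / y` on `[1 / e, ∞)` and to `0` elsewhere:
the integral of `μ` over `{μ ≥ e ^ (-r)}` is asymptotic to `A r`.

Since `μ` is nonincreasing and every power `μ ^ p` with `p > 1` is integrable, the set
`{μ ≥ e ^ (-r)}` is contained in `[0, e ^ ((1 + ε) r)]` for large `r`, while the part of
`[0, e ^ r]` where `μ < e ^ (-r)` contributes at most `1` to the integral of `μ`. Hence the integral
of `μ` over `[0, e ^ r]` is also asymptotic to `A r`, so `g` tends to `A` at infinity, and `ω(g)`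
lies between the liminf and the limsup of `g`.
-/

section Karamata

open Set Topology

/-- Karamata's kernel: the function equal to `1 / x` on `[a, ∞)` and to `0` elsewhere. Multiplied
by `x`, it becomes the indicator function of `[a, ∞)`. -/
noncomputable def cutInv (a : ℝ) : ℝ → ℝ := (Ici a).indicator (·⁻¹)

section CutInv

variable {a b : ℝ}

lemma measurable_cutInv : Measurable (cutInv a) :=
  measurable_inv.indicator measurableSet_Ici

lemma norm_cutInv_le (ha : 0 < a) (x : ℝ) : ‖cutInv a x‖ ≤ a⁻¹ := by
  rw [cutInv, norm_indicator_eq_indicator_norm]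
  refine indicator_apply_le' (fun hx => ?_) fun _ => (inv_pos.2 ha).le
  rw [norm_inv, Real.norm_of_nonneg (ha.le.trans hx)]
  exact inv_anti₀ ha hx

lemma mul_cutInv (ha : 0 < a) (x : ℝ) : x * cutInv a x = (Ici a).indicator 1 x := by
  by_cases hx : a ≤ x
  · simp [cutInv, hx, (ha.trans_le hx).ne']
  · simp [cutInv, hx]

lemma intervalIntegrable_cutInv (ha : 0 < a) (u v : ℝ) :
    IntervalIntegrable (cutInv a) volume u v :=
  intervalIntegrable_iff.2 <| Measure.integrableOn_of_bounded measure_Ioc_lt_top.ne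
    measurable_cutInv.aestronglyMeasurable (.of_forall (norm_cutInv_le ha))

lemma integral_cutInv (ha : 0 < a) (ha1 : a ≤ 1) :
    ∫ x in (0 : ℝ)..1, cutInv a x = -Real.log a := by
  have hset : Ioc 0 1 ∩ Ici a = Icc a 1 := by
    ext x
    exact ⟨fun hx => ⟨hx.2, hx.1.2⟩, fun hx => ⟨⟨ha.trans_le hx.1, hx.2⟩, hx.1⟩⟩
  rw [cutInv, intervalIntegral.integral_of_le zero_le_one,
    setIntegral_indicator measurableSet_Ici, hset, integral_Icc_eq_integral_Ioc,
    ← intervalIntegral.integral_of_le ha1, integral_inv_of_pos ha one_pos, one_div, Real.log_inv]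

lemma exists_continuous_between_cutInv (ha : 0 < a) (hab : a < b) :
    ∃ q : ℝ → ℝ, Continuous q ∧ (∀ x, cutInv b x ≤ q x) ∧ ∀ x, q x ≤ cutInv a x := by
  obtain ⟨k, hk0, hk1, hk⟩ := exists_continuous_zero_one_of_isClosed isClosed_Iic isClosed_Ici
    (Iic_disjoint_Ici.2 hab.not_ge)
  have hpos (x : ℝ) : 0 < max x a := ha.trans_le (le_max_right x a)
  refine ⟨fun x => k x / max x a, k.continuous.div (by fun_prop) fun x => (hpos x).ne',
    fun x => indicator_apply_le' (fun hx => ?_) fun _ => div_nonneg (hk x).1 (hpos x).le,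
    fun x => le_indicator_apply (fun hx => ?_) fun hx => ?_⟩
  · simp only [hk1 hx, max_eq_left (hab.le.trans hx), Pi.one_apply, one_div, le_refl]
  · simp only [max_eq_left hx.out, div_eq_mul_inv]
    exact mul_le_of_le_one_left (inv_nonneg.2 (ha.le.trans hx)) (hk x).2
  · simp only [hk0 (notMem_Ici.1 hx).le, Pi.zero_apply, zero_div, le_refl]

end CutInv

section MulComp

variable {X : Type*} [MeasurableSpace X] {κ : Measure X} {y : X → ℝ} {a b η : ℝ} {p q : ℝ → ℝ}

lemma integrable_mul_comp_of_ae_mem_Icc (hy : Integrable y κ)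
    (hmem : ∀ᵐ x ∂κ, y x ∈ Icc a b) (hq : Continuous q) :
    Integrable (fun x => y x * q (y x)) κ := by
  obtain ⟨C, hC⟩ := isCompact_Icc.exists_bound_of_continuousOn (s := Icc a b) hq.continuousOn
  exact hy.mul_bdd (hq.comp_aestronglyMeasurable hy.1) (hmem.mono fun x hx => hC _ hx)

lemma abs_integral_mul_comp_sub_le (hy : Integrable y κ)
    (hmem : ∀ᵐ x ∂κ, y x ∈ Icc 0 b) (hp : Continuous p) (hq : Continuous q)
    (hpq : ∀ x ∈ Icc 0 b, |p x - q x| ≤ η) :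
    |(∫ x, y x * p (y x) ∂κ) - ∫ x, y x * q (y x) ∂κ| ≤ η * ∫ x, y x ∂κ := by
  rw [← integral_sub (integrable_mul_comp_of_ae_mem_Icc hy hmem hp)
    (integrable_mul_comp_of_ae_mem_Icc hy hmem hq), ← integral_const_mul, ← Real.norm_eq_abs]
  refine norm_integral_le_of_norm_le (hy.const_mul η) (hmem.mono fun x hx => ?_)
  rw [← mul_sub, norm_mul, Real.norm_of_nonneg hx.1, mul_comm η]
  exact mul_le_mul_of_nonneg_left (hpq _ hx) hx.1

lemma integrable_mul_cutInv_comp (ha : 0 < a) (hy : Integrable y κ) :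
    Integrable (fun x => y x * cutInv a (y x)) κ :=
  hy.mul_bdd (measurable_cutInv.comp_aemeasurable hy.aemeasurable).aestronglyMeasurable
    (.of_forall fun x => norm_cutInv_le ha (y x))

lemma integral_mul_cutInv_comp (ha : 0 < a) (hy : AEMeasurable y κ) :
    ∫ x, y x * cutInv a (y x) ∂κ = κ.real {x | a ≤ y x} := by
  have hset : NullMeasurableSet {x | a ≤ y x} κ := nullMeasurableSet_le aemeasurable_const hy
  calc ∫ x, y x * cutInv a (y x) ∂κ = ∫ x, {x | a ≤ y x}.indicator 1 x ∂κ := by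
        simp only [mul_cutInv ha, indicator, mem_Ici, mem_ofPred_eq, Pi.one_apply]
    _ = κ.real {x | a ≤ y x} := by
        rw [integral_indicator₀ hset]
        simp only [Pi.one_apply, setIntegral_const, smul_eq_mul, mul_one]

lemma measureReal_le_integral_mul_comp (ha : 0 < a) (hy : Integrable y κ) (hy0 : 0 ≤ᵐ[κ] y)
    (hyq : Integrable (fun x => y x * q (y x)) κ) (hq : ∀ x, cutInv a x ≤ q x) :
    κ.real {x | a ≤ y x} ≤ ∫ x, y x * q (y x) ∂κ := by
  rw [← integral_mul_cutInv_comp ha hy.aemeasurable]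
  exact integral_mono_ae (integrable_mul_cutInv_comp ha hy) hyq
    (hy0.mono fun x hx => mul_le_mul_of_nonneg_left (hq _) hx)

lemma integral_mul_comp_le_measureReal (ha : 0 < a) (hy : Integrable y κ) (hy0 : 0 ≤ᵐ[κ] y)
    (hyq : Integrable (fun x => y x * q (y x)) κ) (hq : ∀ x, q x ≤ cutInv a x) :
    ∫ x, y x * q (y x) ∂κ ≤ κ.real {x | a ≤ y x} := by
  rw [← integral_mul_cutInv_comp ha hy.aemeasurable]
  exact integral_mono_ae hyq (integrable_mul_cutInv_comp ha hy)
    (hy0.mono fun x hx => mul_le_mul_of_nonneg_left (hq _) hx)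

end MulComp

lemma rpow_inv_mem_Icc {x M r : ℝ} (hx : x ∈ Icc 0 M) (hr : 1 ≤ r) :
    x ^ r⁻¹ ∈ Icc 0 (max M 1) := by
  refine ⟨Real.rpow_nonneg hx.1 _, ?_⟩
  calc x ^ r⁻¹ ≤ max M 1 ^ r⁻¹ :=
        Real.rpow_le_rpow hx.1 (hx.2.trans (le_max_left M 1)) (by positivity)
    _ ≤ max M 1 := Real.rpow_le_self_of_one_le (le_max_right M 1) (inv_le_one_of_one_le₀ hr)

lemma exp_neg_one_le_rpow_inv_iff {x r : ℝ} (hx : 0 ≤ x) (hr : 0 < r) :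
    Real.exp (-1) ≤ x ^ r⁻¹ ↔ Real.exp (-r) ≤ x := by
  rw [Real.le_rpow_inv_iff_of_pos (Real.exp_pos _).le hx hr, ← Real.exp_mul, neg_one_mul]

section Tauberian

variable {X : Type*} [MeasurableSpace X] {κ : Measure X} {h : X → ℝ} {M A : ℝ}

lemma tendsto_integral_rpow_mul_polynomial_div (hmem : ∀ᵐ x ∂κ, h x ∈ Icc 0 M)
    (hint : ∀ r : ℝ, 0 < r → Integrable (fun x => h x ^ r⁻¹) κ)
    (hlim : Tendsto (fun r : ℝ => (∫ x, h x ^ r⁻¹ ∂κ) / r) atTop (𝓝 A)) (P : Polynomial ℝ) :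
    Tendsto (fun r : ℝ => (∫ x, h x ^ r⁻¹ * P.eval (h x ^ r⁻¹) ∂κ) / r) atTop
      (𝓝 (A * ∫ x in (0 : ℝ)..1, P.eval x)) := by
  induction P using Polynomial.induction_on' with
  | add p q hp hq =>
    have hadd := hp.add hq
    rw [← mul_add, ← intervalIntegral.integral_add (p.continuous.intervalIntegrable _ _)
      (q.continuous.intervalIntegrable _ _)] at hadd
    simp only [Polynomial.eval_add]
    refine hadd.congr' ?_
    filter_upwards [eventually_ge_atTop 1] with r hr
    have hint_mul (P : Polynomial ℝ) :
        Integrable (fun x => h x ^ r⁻¹ * P.eval (h x ^ r⁻¹)) κ :=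
      integrable_mul_comp_of_ae_mem_Icc (hint r (one_pos.trans_le hr))
        (hmem.mono fun x hx => rpow_inv_mem_Icc hx hr) P.continuous
    simp only [← add_div, ← integral_add (hint_mul p) (hint_mul q), mul_add]
  | monomial n c =>
    have hn : (0 : ℝ) < n + 1 := by positivity
    have hmoment : A * ∫ x in (0 : ℝ)..1, (Polynomial.monomial n c).eval x
        = c / (n + 1) * A := by
      simp only [Polynomial.eval_monomial, intervalIntegral.integral_const_mul, integral_pow,
        one_pow, zero_pow n.succ_ne_zero, sub_zero]
      ring
    rw [hmoment]
    refine ((hlim.comp (tendsto_id.atTop_div_const hn)).const_mul (c / (n + 1))).congr' ?_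
    filter_upwards [eventually_gt_atTop 0] with r hr
    have hpow : ∀ᵐ x ∂κ, h x ^ r⁻¹ * (Polynomial.monomial n c).eval (h x ^ r⁻¹)
        = c * h x ^ (r / (n + 1))⁻¹ := hmem.mono fun x hx => by
      have hexp : (r / (n + 1))⁻¹ = r⁻¹ * (n + 1 : ℕ) := by push_cast; field_simp
      rw [Polynomial.eval_monomial, hexp, Real.rpow_mul hx.1, Real.rpow_natCast]
      ring
    rw [integral_congr_ae hpow, integral_const_mul]
    simp only [Function.comp_apply, id_eq]
    field_simp

lemma tendsto_integral_rpow_mul_comp_div (hmem : ∀ᵐ x ∂κ, h x ∈ Icc 0 M)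
    (hint : ∀ r : ℝ, 0 < r → Integrable (fun x => h x ^ r⁻¹) κ) (hA : 0 ≤ A)
    (hlim : Tendsto (fun r : ℝ => (∫ x, h x ^ r⁻¹ ∂κ) / r) atTop (𝓝 A)) {q : ℝ → ℝ}
    (hq : Continuous q) :
    Tendsto (fun r : ℝ => (∫ x, h x ^ r⁻¹ * q (h x ^ r⁻¹) ∂κ) / r) atTop
      (𝓝 (A * ∫ x in (0 : ℝ)..1, q x)) := by
  refine Metric.tendsto_nhds.2 fun ε hε => ?_
  set η := ε / (2 * A + 1)
  have hη : 0 < η := by positivity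
  have hηA : η * A + A * η < ε := by
    have : η * (2 * A + 1) = ε := div_mul_cancel₀ ε (by positivity)
    linarith
  obtain ⟨P, hP⟩ := exists_polynomial_near_of_continuousOn 0 (max M 1) q hq.continuousOn η hη
  have hPq : ∀ x ∈ Icc 0 (max M 1), |q x - P.eval x| ≤ η := fun x hx => by
    rw [abs_sub_comm]
    exact (hP x hx).le
  have hintegral : |(∫ x in (0 : ℝ)..1, P.eval x) - ∫ x in (0 : ℝ)..1, q x| ≤ η := by
    rw [← intervalIntegral.integral_sub (P.continuous.intervalIntegrable _ _)
      (hq.intervalIntegrable _ _), ← Real.norm_eq_abs]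
    refine (intervalIntegral.norm_integral_le_of_norm_le_const (C := η) fun x hx => ?_).trans
      (by norm_num)
    rw [uIoc_of_le zero_le_one] at hx
    exact (hP x ⟨hx.1.le, hx.2.trans (le_max_right M 1)⟩).le
  have hpoly := tendsto_integral_rpow_mul_polynomial_div hmem hint hlim P
  have herror := ((hlim.const_mul η).add (tendsto_iff_dist_tendsto_zero.1 hpoly)).add_const (A * η)
  rw [add_zero] at herror
  filter_upwards [herror.eventually_lt_const hηA, eventually_ge_atTop 1] with r hr hr1
  have hr0 : 0 < r := one_pos.trans_le hr1
  refine lt_of_le_of_lt ?_ hr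
  refine (dist_triangle4 _ _ _ _).trans (add_le_add_three ?_ le_rfl ?_)
  · rw [Real.dist_eq, ← sub_div, abs_div, abs_of_pos hr0, ← mul_div_assoc]
    gcongr
    exact abs_integral_mul_comp_sub_le (hint r hr0)
      (hmem.mono fun x hx => rpow_inv_mem_Icc hx hr1) hq P.continuous hPq
  · rw [Real.dist_eq, ← mul_sub, abs_mul, abs_of_nonneg hA]
    gcongr

lemma tendsto_mul_neg_log_nhds_exp_neg_one (A : ℝ) :
    Tendsto (fun a : ℝ => A * -Real.log a) (𝓝 (Real.exp (-1))) (𝓝 A) := by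
  simpa using (Real.continuousAt_log (Real.exp_pos (-1)).ne').neg.tendsto.const_mul A

lemma eventually_measureReal_exp_neg_le_div_lt {c : ℝ} (hmem : ∀ᵐ x ∂κ, h x ∈ Icc 0 M)
    (hint : ∀ r : ℝ, 0 < r → Integrable (fun x => h x ^ r⁻¹) κ) (hA : 0 ≤ A)
    (hlim : Tendsto (fun r : ℝ => (∫ x, h x ^ r⁻¹ ∂κ) / r) atTop (𝓝 A)) (hc : A < c) :
    ∀ᶠ r in atTop, κ.real {x | Real.exp (-1) ≤ h x ^ r⁻¹} / r < c := by
  obtain ⟨a, hac, ha0, ha⟩ := ((((tendsto_mul_neg_log_nhds_exp_neg_one A).mono_left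
    nhdsWithin_le_nhds).eventually_lt_const hc).and (Ioo_mem_nhdsLT (Real.exp_pos (-1)))).exists
  obtain ⟨q, hq, hlow, hupp⟩ := exists_continuous_between_cutInv ha0 ha
  have ha1 : a ≤ 1 := ha.le.trans (Real.exp_le_one_iff.2 (by norm_num))
  have hqc : A * ∫ x in (0 : ℝ)..1, q x < c := by
    refine lt_of_le_of_lt (mul_le_mul_of_nonneg_left ?_ hA) hac
    rw [← integral_cutInv ha0 ha1]
    exact intervalIntegral.integral_mono zero_le_one (hq.intervalIntegrable _ _)
      (intervalIntegrable_cutInv ha0 _ _) hupp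
  filter_upwards [eventually_ge_atTop 1, (tendsto_integral_rpow_mul_comp_div hmem hint hA hlim
    hq).eventually_lt_const hqc] with r hr1 hr
  have hr0 : 0 < r := one_pos.trans_le hr1
  have hmem_pow := hmem.mono fun x hx => rpow_inv_mem_Icc hx hr1
  refine lt_of_le_of_lt (div_le_div_of_nonneg_right ?_ hr0.le) hr
  exact measureReal_le_integral_mul_comp (Real.exp_pos _) (hint r hr0)
    (hmem_pow.mono fun x hx => hx.1)
    (integrable_mul_comp_of_ae_mem_Icc (hint r hr0) hmem_pow hq) hlow

lemma eventually_lt_measureReal_exp_neg_le_div {c : ℝ} (hmem : ∀ᵐ x ∂κ, h x ∈ Icc 0 M)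
    (hint : ∀ r : ℝ, 0 < r → Integrable (fun x => h x ^ r⁻¹) κ) (hA : 0 ≤ A)
    (hlim : Tendsto (fun r : ℝ => (∫ x, h x ^ r⁻¹ ∂κ) / r) atTop (𝓝 A)) (hc : c < A) :
    ∀ᶠ r in atTop, c < κ.real {x | Real.exp (-1) ≤ h x ^ r⁻¹} / r := by
  obtain ⟨b, hbc, hb, hb1⟩ := ((((tendsto_mul_neg_log_nhds_exp_neg_one A).mono_left
    nhdsWithin_le_nhds).eventually_const_lt hc).and
    (Ioo_mem_nhdsGT (Real.exp_lt_one_iff.2 neg_one_lt_zero))).exists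
  have hb0 : 0 < b := (Real.exp_pos _).trans hb
  obtain ⟨q, hq, hlow, hupp⟩ := exists_continuous_between_cutInv (Real.exp_pos _) hb
  have hqc : c < A * ∫ x in (0 : ℝ)..1, q x := by
    refine lt_of_lt_of_le hbc (mul_le_mul_of_nonneg_left ?_ hA)
    rw [← integral_cutInv hb0 hb1.le]
    exact intervalIntegral.integral_mono zero_le_one (intervalIntegrable_cutInv hb0 _ _)
      (hq.intervalIntegrable _ _) hlow
  filter_upwards [eventually_ge_atTop 1, (tendsto_integral_rpow_mul_comp_div hmem hint hA hlim
    hq).eventually_const_lt hqc] with r hr1 hr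
  have hr0 : 0 < r := one_pos.trans_le hr1
  have hmem_pow := hmem.mono fun x hx => rpow_inv_mem_Icc hx hr1
  refine lt_of_lt_of_le hr (div_le_div_of_nonneg_right ?_ hr0.le)
  exact integral_mul_comp_le_measureReal (Real.exp_pos _) (hint r hr0)
    (hmem_pow.mono fun x hx => hx.1)
    (integrable_mul_comp_of_ae_mem_Icc (hint r hr0) hmem_pow hq) hupp

/-- A form of Karamata's Tauberian theorem: for `h = exp (-u)`, the behaviour at infinity of the
Laplace transform `r ↦ ∫ exp (-u / r) dκ` determines the growth of `r ↦ κ {u ≤ r}`. -/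
theorem tendsto_measureReal_exp_neg_le_div (hmem : ∀ᵐ x ∂κ, h x ∈ Icc 0 M)
    (hint : ∀ r : ℝ, 0 < r → Integrable (fun x => h x ^ r⁻¹) κ)
    (hlim : Tendsto (fun r : ℝ => (∫ x, h x ^ r⁻¹ ∂κ) / r) atTop (𝓝 A)) :
    Tendsto (fun r : ℝ => κ.real {x | Real.exp (-r) ≤ h x} / r) atTop (𝓝 A) := by
  have hA : 0 ≤ A := ge_of_tendsto hlim <| (eventually_gt_atTop 0).mono fun r hr =>
    div_nonneg (integral_nonneg_of_ae (hmem.mono fun x hx => Real.rpow_nonneg hx.1 _)) hr.le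
  have hroot : Tendsto (fun r : ℝ => κ.real {x | Real.exp (-1) ≤ h x ^ r⁻¹} / r) atTop (𝓝 A) :=
    tendsto_order.2 ⟨fun _ => eventually_lt_measureReal_exp_neg_le_div hmem hint hA hlim,
      fun _ => eventually_measureReal_exp_neg_le_div_lt hmem hint hA hlim⟩
  refine hroot.congr' ((eventually_gt_atTop 0).mono fun r hr => ?_)
  congr 1
  exact measureReal_congr (hmem.mono fun x hx => propext (exp_neg_one_le_rpow_inv_iff hx.1 hr))

variable {m : Measure X} {f : X → ℝ}

lemma tendsto_setIntegral_exp_neg_le_div [SFinite m] (hf : AEMeasurable f m)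
    (hmem : ∀ᵐ x ∂m, f x ∈ Icc 0 M)
    (hint : ∀ p : ℝ, 1 < p → Integrable (fun x => f x ^ p) m)
    (hlim : Tendsto (fun r : ℝ => (∫ x, f x ^ (1 + 1 / r) ∂m) / r) atTop (𝓝 A)) :
    Tendsto (fun r : ℝ => (∫ x in {x | Real.exp (-r) ≤ f x}, f x ∂m) / r) atTop (𝓝 A) := by
  set κ := m.withDensity fun x => ENNReal.ofReal (f x)
  have hdensity (r : ℝ) (hr : 0 < r) :
      (fun x => (ENNReal.ofReal (f x)).toReal • f x ^ r⁻¹) =ᵐ[m] fun x => f x ^ (1 + 1 / r) :=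
    hmem.mono fun x hx => by
      simp only [ENNReal.toReal_ofReal hx.1, smul_eq_mul, one_div]
      rw [Real.rpow_one_add' hx.1 (by positivity)]
  have hfin : ∀ᵐ x ∂m, ENNReal.ofReal (f x) < ⊤ := .of_forall fun x => ENNReal.ofReal_lt_top
  have hmass (r : ℝ) :
      κ.real {x | Real.exp (-r) ≤ f x} = ∫ x in {x | Real.exp (-r) ≤ f x}, f x ∂m := by
    rw [integral_eq_lintegral_of_nonneg_ae (ae_restrict_of_ae (hmem.mono fun x hx => hx.1))
      hf.restrict.aestronglyMeasurable, Measure.real, withDensity_apply']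
  simp only [← hmass]
  refine tendsto_measureReal_exp_neg_le_div (M := M)
    ((withDensity_absolutelyContinuous m _).ae_le hmem) (fun r hr => ?_) ?_
  · rw [integrable_withDensity_iff_integrable_smul₀' hf.ennreal_ofReal hfin,
      integrable_congr (hdensity r hr)]
    exact hint _ (lt_add_of_pos_right 1 (one_div_pos.2 hr))
  · refine hlim.congr' ((eventually_gt_atTop 0).mono fun r hr => ?_)
    simp only [κ]
    rw [integral_withDensity_eq_integral_toReal_smul₀ hf.ennreal_ofReal hfin,
      integral_congr_ae (hdensity r hr)]

end Tauberian

end Karamata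

section AntitoneOn

open Set Topology

variable {μ : ℝ → ℝ} {A K : ℝ}

lemma mul_le_integral_of_antitoneOn {f : ℝ → ℝ} {t : ℝ} (ht : 0 ≤ t)
    (hf : AntitoneOn f (Icc 0 t)) : t * f t ≤ ∫ s in (0 : ℝ)..t, f s := by
  have hint : IntervalIntegrable f volume 0 t :=
    AntitoneOn.intervalIntegrable (by rwa [uIcc_of_le ht])
  calc t * f t = ∫ _ in (0 : ℝ)..t, f t := by simp
    _ ≤ ∫ s in (0 : ℝ)..t, f s :=
        intervalIntegral.integral_mono_on ht intervalIntegrable_const hint fun s hs =>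
          hf hs (right_mem_Icc.2 ht) hs.2

lemma intervalIntegrable_of_antitoneOn_Ici (hmono : AntitoneOn μ (Ici 0)) {t : ℝ} (ht : 0 ≤ t) :
    IntervalIntegrable μ volume 0 t :=
  (hmono.mono (by rw [uIcc_of_le ht]; exact Icc_subset_Ici_self)).intervalIntegrable

lemma aemeasurable_Ioi_of_antitoneOn_Ici (hmono : AntitoneOn μ (Ici 0)) :
    AEMeasurable μ (volume.restrict (Ioi 0)) :=
  aemeasurable_restrict_of_antitoneOn measurableSet_Ioi (hmono.mono Ioi_subset_Ici_self)

lemma antitoneOn_rpow {f : ℝ → ℝ} {s : Set ℝ} {p : ℝ} (hf0 : ∀ x ∈ s, 0 ≤ f x)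
    (hf : AntitoneOn f s) (hp : 0 ≤ p) : AntitoneOn (fun x => f x ^ p) s :=
  fun _ hx y hy hxy => Real.rpow_le_rpow (hf0 y hy) (hf hx hy hxy) hp

lemma ae_mem_Icc_of_antitoneOn_Ici (hμ0 : ∀ s : ℝ, 0 ≤ s → 0 ≤ μ s)
    (hmono : AntitoneOn μ (Ici 0)) : ∀ᵐ s ∂volume.restrict (Ioi 0), μ s ∈ Icc 0 (μ 0) :=
  ae_restrict_of_forall_mem measurableSet_Ioi fun s hs =>
    ⟨hμ0 s hs.out.le, hmono self_mem_Ici hs.out.le hs.out.le⟩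

lemma mul_rpow_le_setIntegral_Ioi (hμ0 : ∀ s : ℝ, 0 ≤ s → 0 ≤ μ s)
    (hmono : AntitoneOn μ (Ici 0)) {p t : ℝ} (hp : 0 ≤ p)
    (hint : IntegrableOn (fun s => μ s ^ p) (Ioi 0)) (ht : 0 ≤ t) :
    t * μ t ^ p ≤ ∫ s in Ioi (0 : ℝ), μ s ^ p := by
  refine (mul_le_integral_of_antitoneOn ht
    ((antitoneOn_rpow hμ0 hmono hp).mono Icc_subset_Ici_self)).trans ?_
  rw [intervalIntegral.integral_of_le ht]
  exact setIntegral_mono_set hint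
    (ae_restrict_of_forall_mem measurableSet_Ioi fun s hs => Real.rpow_nonneg (hμ0 s hs.out.le) p)
    Ioc_subset_Ioi_self.eventuallyLE

lemma eventually_forall_le_exp_of_exp_neg_le (hμ0 : ∀ s : ℝ, 0 ≤ s → 0 ≤ μ s)
    (hmono : AntitoneOn μ (Ici 0))
    (hint : ∀ p : ℝ, 1 < p → IntegrableOn (fun s => μ s ^ p) (Ioi 0)) {ε : ℝ} (hε : 0 < ε) :
    ∀ᶠ r in atTop, ∀ s, 0 ≤ s → Real.exp (-r) ≤ μ s → s ≤ Real.exp ((1 + ε) * r) := by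
  -- Chebyshev's inequality, with an exponent strictly between `1` and `1 + ε`.
  set p := 1 + ε / 2 with hp
  have hp1 : 1 < p := by linarith
  have hp0 : 0 ≤ p := by linarith
  filter_upwards [(Real.tendsto_exp_atTop.comp
    (tendsto_id.const_mul_atTop (half_pos hε))).eventually_ge_atTop (∫ s in Ioi (0 : ℝ), μ s ^ p)]
    with r hr s hs hμs
  have hsplit : Real.exp ((1 + ε) * r) = Real.exp (ε / 2 * r) * Real.exp (p * r) := by
    rw [← Real.exp_add, hp]
    ring_nf
  have hpow : Real.exp (p * r) * Real.exp (-r) ^ p = 1 := by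
    rw [← Real.exp_mul, ← Real.exp_add, neg_mul, mul_comm r, add_neg_cancel, Real.exp_zero]
  calc s = Real.exp (p * r) * (s * Real.exp (-r) ^ p) := by rw [mul_left_comm, hpow, mul_one]
    _ ≤ Real.exp (p * r) * (s * μ s ^ p) := by gcongr
    _ ≤ Real.exp (p * r) * Real.exp (ε / 2 * r) := by
        gcongr
        exact (mul_rpow_le_setIntegral_Ioi hμ0 hmono hp0 (hint p hp1) hs).trans hr
    _ = Real.exp ((1 + ε) * r) := by rw [hsplit, mul_comm]

lemma integral_zero_eq_setIntegral_restrict_Ioi {f : ℝ → ℝ} {t : ℝ} (ht : 0 ≤ t) :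
    ∫ s in (0 : ℝ)..t, f s = ∫ s in Ioc 0 t, f s ∂volume.restrict (Ioi 0) := by
  rw [intervalIntegral.integral_of_le ht,
    Measure.restrict_restrict_of_subset Ioc_subset_Ioi_self]

lemma integrableOn_Ioc_restrict_Ioi (hmono : AntitoneOn μ (Ici 0)) {t : ℝ} (ht : 0 ≤ t) :
    IntegrableOn μ (Ioc 0 t) (volume.restrict (Ioi 0)) :=
  ((intervalIntegrable_iff_integrableOn_Ioc_of_le ht).1
    (intervalIntegrable_of_antitoneOn_Ici hmono ht)).mono_measure Measure.restrict_le_self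

section Superlevel

variable {c T : ℝ}

lemma superlevel_ae_le_Ioc (hsub : ∀ s, 0 ≤ s → c ≤ μ s → s ≤ T) :
    {s | c ≤ μ s} ≤ᵐ[volume.restrict (Ioi 0)] Ioc 0 T :=
  ae_restrict_of_forall_mem measurableSet_Ioi fun s hs hcs => ⟨hs, hsub s hs.out.le hcs⟩

lemma setIntegral_superlevel_le_integral (hμ0 : ∀ s : ℝ, 0 ≤ s → 0 ≤ μ s)
    (hmono : AntitoneOn μ (Ici 0)) (hT : 0 ≤ T) (hsub : ∀ s, 0 ≤ s → c ≤ μ s → s ≤ T) :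
    ∫ s in {s | c ≤ μ s}, μ s ∂volume.restrict (Ioi 0) ≤ ∫ s in (0 : ℝ)..T, μ s := by
  rw [integral_zero_eq_setIntegral_restrict_Ioi hT]
  exact setIntegral_mono_set (integrableOn_Ioc_restrict_Ioi hmono hT)
    (ae_restrict_of_ae ((ae_mem_Icc_of_antitoneOn_Ici hμ0 hmono).mono fun s hs => hs.1))
    (superlevel_ae_le_Ioc hsub)

lemma integral_le_setIntegral_superlevel_add (hμ0 : ∀ s : ℝ, 0 ≤ s → 0 ≤ μ s)
    (hmono : AntitoneOn μ (Ici 0)) (hc : 0 ≤ c) (hT : 0 ≤ T)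
    (hsub : ∀ s, 0 ≤ s → c ≤ μ s → s ≤ T) {t : ℝ} (ht : 0 ≤ t) :
    ∫ s in (0 : ℝ)..t, μ s ≤
      (∫ s in {s | c ≤ μ s}, μ s ∂volume.restrict (Ioi 0)) + c * t := by
  set m := (volume : Measure ℝ).restrict (Ioi 0)
  set S := {s | c ≤ μ s}
  have hS : NullMeasurableSet S m :=
    nullMeasurableSet_le aemeasurable_const (aemeasurable_Ioi_of_antitoneOn_Ici hmono)
  have hμS : IntegrableOn μ S m :=
    (integrableOn_Ioc_restrict_Ioi hmono hT).mono_set_ae (superlevel_ae_le_Ioc hsub)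
  have hIoc : m.real (Ioc 0 t) = t := by
    rw [measureReal_restrict_apply measurableSet_Ioc, inter_eq_left.2 Ioc_subset_Ioi_self,
      Real.volume_real_Ioc_of_le ht, sub_zero]
  have hIoc_ne_top : m (Ioc 0 t) ≠ ⊤ :=
    ((Measure.restrict_apply_le _ _).trans_lt measure_Ioc_lt_top).ne
  have hbelow : ∫ s in Ioc 0 t \ S, μ s ∂m ≤ c * t := by
    have hbound : ‖∫ s in Ioc 0 t \ S, μ s ∂m‖ ≤ c * m.real (Ioc 0 t \ S) := by
      refine norm_setIntegral_le_of_norm_le_const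
        (measure_lt_top_of_subset sdiff_subset hIoc_ne_top) fun s hs => ?_
      rw [Real.norm_of_nonneg (hμ0 s hs.1.1.le)]
      exact (not_le.1 hs.2).le
    refine ((Real.le_norm_self _).trans hbound).trans (mul_le_mul_of_nonneg_left ?_ hc)
    exact (measureReal_mono sdiff_subset hIoc_ne_top).trans_eq hIoc
  calc ∫ s in (0 : ℝ)..t, μ s
      = (∫ s in Ioc 0 t ∩ S, μ s ∂m) + ∫ s in Ioc 0 t \ S, μ s ∂m := by
        rw [integral_zero_eq_setIntegral_restrict_Ioi ht,
          integral_inter_add_sdiff₀ hS (integrableOn_Ioc_restrict_Ioi hmono ht)]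
    _ ≤ (∫ s in S, μ s ∂m) + c * t := by
        refine add_le_add (setIntegral_mono_set hμS ?_ inter_subset_right.eventuallyLE) hbelow
        exact ae_restrict_of_ae ((ae_mem_Icc_of_antitoneOn_Ici hμ0 hmono).mono fun s hs => hs.1)

end Superlevel

lemma tendsto_integral_exp_div (hμ0 : ∀ s : ℝ, 0 ≤ s → 0 ≤ μ s)
    (hmono : AntitoneOn μ (Ici 0))
    (hint : ∀ p : ℝ, 1 < p → IntegrableOn (fun s => μ s ^ p) (Ioi 0))
    (hlim : Tendsto (fun r : ℝ => (∫ s in Ioi (0 : ℝ), μ s ^ (1 + 1 / r)) / r) atTop (𝓝 A)) :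
    Tendsto (fun r : ℝ => (∫ s in (0 : ℝ)..Real.exp r, μ s) / r) atTop (𝓝 A) := by
  have hlevel := tendsto_setIntegral_exp_neg_le_div (aemeasurable_Ioi_of_antitoneOn_Ici hmono)
    (ae_mem_Icc_of_antitoneOn_Ici hμ0 hmono) hint hlim
  refine tendsto_order.2 ⟨fun c hc => ?_, fun c hc => ?_⟩
  · have hnear : Tendsto (fun ε : ℝ => A / (1 + ε)) (𝓝[>] 0) (𝓝 A) := by
      have hcont : ContinuousAt (fun ε : ℝ => A / (1 + ε)) 0 := by fun_prop (disch := norm_num)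
      simpa using hcont.tendsto.mono_left nhdsWithin_le_nhds
    obtain ⟨ε, hcε, hε⟩ := ((hnear.eventually_const_lt hc).and self_mem_nhdsWithin).exists
    have hε1 : 0 < 1 + ε := add_pos one_pos hε
    have hscale : Tendsto (fun r : ℝ => r / (1 + ε)) atTop atTop := tendsto_id.atTop_div_const hε1
    have hscaled := (hlevel.comp hscale).div_const (1 + ε)
    filter_upwards [hscaled.eventually_const_lt hcε, eventually_gt_atTop 0,
      hscale.eventually (eventually_forall_le_exp_of_exp_neg_le hμ0 hmono hint hε)]
      with r hr hr0 hsub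
    rw [mul_div_cancel₀ r hε1.ne'] at hsub
    refine hr.trans_le ?_
    rw [Function.comp_apply, div_div, div_mul_cancel₀ r hε1.ne']
    gcongr
    exact setIntegral_superlevel_le_integral hμ0 hmono (Real.exp_pos r).le hsub
  · have hone := hlevel.add tendsto_inv_atTop_zero
    rw [add_zero] at hone
    filter_upwards [hone.eventually_lt_const hc, eventually_gt_atTop 0,
      eventually_forall_le_exp_of_exp_neg_le hμ0 hmono hint one_pos] with r hr hr0 hsub
    refine lt_of_le_of_lt ?_ hr
    rw [← one_div, ← add_div]
    gcongr
    refine (integral_le_setIntegral_superlevel_add hμ0 hmono (Real.exp_pos _).le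
      (Real.exp_pos _).le hsub (Real.exp_pos r).le).trans_eq ?_
    rw [← Real.exp_add, neg_add_cancel, Real.exp_zero]

lemma tendsto_log_div_log_one_add :
    Tendsto (fun t : ℝ => Real.log t / Real.log (1 + t)) atTop (𝓝 1) := by
  have hinv := ((Real.tendsto_log_comp_add_sub_log 1).div_atTop Real.tendsto_log_atTop).const_add 1
  have hdiv := hinv.inv₀ (by norm_num)
  rw [add_zero, inv_one] at hdiv
  refine hdiv.congr' ((eventually_gt_atTop 1).mono fun t ht => ?_)
  have hlog : Real.log t ≠ 0 := (Real.log_pos ht).ne'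
  rw [sub_div, div_self hlog, add_sub_cancel, inv_div, add_comm]

lemma tendsto_gFn (hμ0 : ∀ s : ℝ, 0 ≤ s → 0 ≤ μ s) (hmono : AntitoneOn μ (Ici 0))
    (hint : ∀ p : ℝ, 1 < p → IntegrableOn (fun s => μ s ^ p) (Ioi 0))
    (hlim : Tendsto (fun r : ℝ => (∫ s in Ioi (0 : ℝ), μ s ^ (1 + 1 / r)) / r) atTop (𝓝 A)) :
    Tendsto (gFn μ) atTop (𝓝 A) := by
  have hlog := ((tendsto_integral_exp_div hμ0 hmono hint hlim).comp Real.tendsto_log_atTop).mul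
    tendsto_log_div_log_one_add
  rw [mul_one] at hlog
  refine hlog.congr' ((eventually_gt_atTop 1).mono fun t ht => ?_)
  have ht0 : 0 < t := one_pos.trans ht
  simp only [Function.comp_apply, gFn, if_pos ht0, Real.exp_log ht0]
  exact div_mul_div_cancel₀ (Real.log_pos ht).ne'

lemma measurable_gFn (hmono : AntitoneOn μ (Ici 0)) : Measurable (gFn μ) := by
  have hprim : ContinuousOn (fun t => ∫ s in (0 : ℝ)..t, μ s) (Ioi 0) := fun t ht => by
    have ht1 : 0 ≤ t + 1 := add_nonneg ht.out.le zero_le_one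
    have hcont := intervalIntegral.continuousOn_primitive_interval'
      (intervalIntegrable_of_antitoneOn_Ici hmono ht1) left_mem_uIcc
    rw [uIcc_of_le ht1] at hcont
    exact (hcont.continuousAt (Icc_mem_nhds ht (lt_add_one t))).continuousWithinAt
  have hlog : ContinuousOn (fun t : ℝ => Real.log (1 + t)) (Ioi 0) :=
    ContinuousOn.log (by fun_prop) fun t ht => (add_pos one_pos ht).ne'
  exact (hprim.div hlog fun t ht => (Real.log_pos (lt_add_of_pos_right 1 ht)).ne')
    |>.measurable_piecewise continuousOn_const measurableSet_Ioi

lemma abs_gFn_le (hμ0 : ∀ s : ℝ, 0 ≤ s → 0 ≤ μ s) (hmono : AntitoneOn μ (Ici 0)) {t T : ℝ}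
    (hT : 0 ≤ T) (htT : t ≤ T) : |gFn μ t| ≤ μ 0 * (1 + T) := by
  have hμ00 : 0 ≤ μ 0 := hμ0 0 le_rfl
  rcases le_or_gt t 0 with ht0 | ht0
  · rw [gFn, if_neg ht0.not_gt, abs_zero]
    positivity
  have hlog : t / (1 + t) ≤ Real.log (1 + t) := by
    refine le_of_eq_of_le ?_ (Real.one_sub_inv_le_log_of_pos (by positivity))
    field_simp
    ring
  have hint : |∫ s in (0 : ℝ)..t, μ s| ≤ μ 0 * t := by
    refine (intervalIntegral.norm_integral_le_of_norm_le_const (f := μ) (C := μ 0)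
      fun s hs => ?_).trans_eq (by rw [sub_zero, abs_of_pos ht0])
    rw [uIoc_of_le ht0.le] at hs
    rw [Real.norm_of_nonneg (hμ0 s hs.1.le)]
    exact hmono self_mem_Ici hs.1.le hs.1.le
  have hlog0 : 0 < Real.log (1 + t) := lt_of_lt_of_le (by positivity) hlog
  rw [gFn, if_pos ht0, abs_div, abs_of_pos hlog0]
  calc |∫ s in (0 : ℝ)..t, μ s| / Real.log (1 + t) ≤ μ 0 * t / (t / (1 + t)) := by gcongr
    _ = μ 0 * (1 + t) := by field_simp
    _ ≤ μ 0 * (1 + T) := by gcongr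

lemma bddFun_gFn (hμ0 : ∀ s : ℝ, 0 ≤ s → 0 ≤ μ s) (hmono : AntitoneOn μ (Ici 0))
    (hlim : Tendsto (gFn μ) atTop (𝓝 A)) : BddFun (gFn μ) := by
  obtain ⟨T, hT0, hT⟩ : ∃ T, 0 ≤ T ∧ ∀ t ≥ T, |gFn μ t| < |A| + 1 := by
    obtain ⟨T, hT⟩ := eventually_atTop.1 ((eventually_ge_atTop 0).and
      (hlim.abs.eventually_lt_const (lt_add_one |A|)))
    exact ⟨T, (hT T le_rfl).1, fun t ht => (hT t ht).2⟩
  refine ⟨max (|A| + 1) (μ 0 * (1 + T)), fun t => ?_⟩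
  rcases le_total T t with ht | ht
  · exact le_max_of_le_left (hT t ht).le
  · exact le_max_of_le_right (abs_gFn_le hμ0 hmono hT0 ht)

lemma locallyIntegrableOn_of_antitoneOn {f : ℝ → ℝ} {s : Set ℝ} (hs : IsLocallyClosed s)
    (hf : AntitoneOn f s) : LocallyIntegrableOn f s :=
  (locallyIntegrableOn_iff hs).2 fun _ hk hkc => (hf.mono hk).integrableOn_isCompact hkc

lemma isBigO_log_mul_inv_of_integral_le_log (hμ0 : ∀ s : ℝ, 0 ≤ s → 0 ≤ μ s)
    (hmono : AntitoneOn μ (Ici 0))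
    (hlog : ∀ t : ℝ, 0 < t → ∫ s in (0 : ℝ)..t, μ s ≤ K * Real.log (1 + t)) :
    μ =O[atTop] fun s => Real.log s * s⁻¹ := by
  refine .of_bound (|K| * 2) ((eventually_ge_atTop 2).mono fun s hs => ?_)
  have hs0 : 0 < s := two_pos.trans_le hs
  have hlog0 : 0 ≤ Real.log s := Real.log_nonneg (by linarith)
  have hlog_le : Real.log (1 + s) ≤ 2 * Real.log s := by
    rw [← Nat.cast_two, ← Real.log_pow]
    exact Real.log_le_log (by positivity) (by nlinarith)
  rw [Real.norm_of_nonneg (hμ0 s hs0.le), Real.norm_of_nonneg (by positivity), ← mul_assoc,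
    ← div_eq_mul_inv, le_div_iff₀' hs0]
  calc s * μ s ≤ ∫ x in (0 : ℝ)..s, μ x :=
        mul_le_integral_of_antitoneOn hs0.le (hmono.mono Icc_subset_Ici_self)
    _ ≤ |K| * Real.log (1 + s) := (hlog s hs0).trans <|
        mul_le_mul_of_nonneg_right (le_abs_self K) (Real.log_nonneg (by linarith))
    _ ≤ |K| * (2 * Real.log s) := by gcongr
    _ = |K| * 2 * Real.log s := (mul_assoc _ _ _).symm

lemma integrableOn_rpow_of_integral_le_log (hμ0 : ∀ s : ℝ, 0 ≤ s → 0 ≤ μ s)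
    (hmono : AntitoneOn μ (Ici 0))
    (hlog : ∀ t : ℝ, 0 < t → ∫ s in (0 : ℝ)..t, μ s ≤ K * Real.log (1 + t)) {p : ℝ}
    (hp : 1 < p) : IntegrableOn (fun s => μ s ^ p) (Ioi 0) := by
  have hp0 : 0 < p := one_pos.trans hp
  set δ := (1 - p⁻¹) / 2 with hδ
  have hδ0 : 0 < δ := half_pos (sub_pos.2 (inv_lt_one_of_one_lt₀ hp))
  have hexp : (δ - 1) * p < -1 := by
    have : (δ - 1) * p = (-1 - p) / 2 := by rw [hδ]; field_simp; ring
    linarith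
  have hdecay : μ =O[atTop] fun s => s ^ (δ - 1) := by
    refine ((isBigO_log_mul_inv_of_integral_le_log hμ0 hmono hlog).trans
      ((isLittleO_log_rpow_atTop hδ0).isBigO.mul (Asymptotics.isBigO_refl _ _))).congr' .rfl ?_
    filter_upwards [eventually_gt_atTop 0] with s hs
    rw [Real.rpow_sub_one hs.ne', div_eq_mul_inv]
  have hpow : (fun s => μ s ^ p) =O[atTop] fun s => s ^ ((δ - 1) * p) := by
    refine (hdecay.rpow hp0.le ?_).congr' .rfl ?_
    all_goals filter_upwards [eventually_ge_atTop 0] with s hs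
    · exact Real.rpow_nonneg hs _
    · exact (Real.rpow_mul hs _ _).symm
  exact ((locallyIntegrableOn_of_antitoneOn isClosed_Ici.isLocallyClosed
    (antitoneOn_rpow hμ0 hmono hp0.le)).integrableOn_of_isBigO_atTop hpow
    (integrableAtFilter_rpow_atTop_iff.2 hexp)).mono_set Ioi_subset_Ici_self

end AntitoneOn

lemma neBot_atTop_inf_ae_restrict_Ioi (a : ℝ) :
    (atTop ⊓ ae ((volume : Measure ℝ).restrict (Set.Ioi a))).NeBot := by
  refine inf_neBot_iff_frequently_left.2 fun {P} hP => frequently_ae_iff.2 fun hnull => ?_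
  obtain ⟨T, hT⟩ := eventually_atTop.1 hP
  have hsub : Set.Ioi (max T a) ⊆ {x | P x} := fun x hx => hT x ((le_max_left T a).trans hx.out.le)
  have htop : (volume : Measure ℝ).restrict (Set.Ioi a) (Set.Ioi (max T a)) = ⊤ := by
    rw [Measure.restrict_apply measurableSet_Ioi, Set.Ioi_inter_Ioi, Real.volume_Ioi]
  exact ENNReal.top_ne_zero (htop.symm.trans (measure_mono_null hsub hnull))

theorem zeta_residue_limit_implies_dixmier_trace_general {μ : ℝ → ℝ} {A : ℝ}
    (hμ0 : ∀ s : ℝ, 0 ≤ s → 0 ≤ μ s) (hmono : AntitoneOn μ (Set.Ici 0))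
    (hint : ∀ p : ℝ, 1 < p → IntegrableOn (fun s => μ s ^ p) (Set.Ioi 0))
    (hlim : Tendsto (fun r : ℝ => (∫ s in Set.Ioi (0 : ℝ), μ s ^ (1 + 1 / r)) / r)
      atTop (nhds A)) (ω : (ℝ → ℝ) → ℝ)
    (hω : ∀ f : ℝ → ℝ, Measurable f → BddFun f →
      liminf f (atTop ⊓ ae ((volume : Measure ℝ).restrict (Set.Ioi 0))) ≤ ω f ∧
        ω f ≤ limsup f (atTop ⊓ ae ((volume : Measure ℝ).restrict (Set.Ioi 0)))) :
    ω (gFn μ) = A := by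
  have hg := tendsto_gFn hμ0 hmono hint hlim
  obtain ⟨hlow, hupp⟩ := hω _ (measurable_gFn hmono) (bddFun_gFn hμ0 hmono hg)
  have := neBot_atTop_inf_ae_restrict_Ioi 0
  have hg_ae := hg.mono_left (inf_le_left (b := ae ((volume : Measure ℝ).restrict (Set.Ioi 0))))
  rw [hg_ae.liminf_eq] at hlow
  rw [hg_ae.limsup_eq] at hupp
  exact le_antisymm hupp hlow

/-- **Theorem 10.6, second part.** Let `μ : [0,∞) → [0,1]` be nonincreasing with
`∫₀^t μ ≤ K log(1+t)`, and suppose the limit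
`lim_{r→∞} (1/r)∫₀^∞ μ(s)^{1+1/r} ds = A` exists.  Then `ω(g) = A` for every positive
dilation-invariant linear functional `ω` on `L∞((0,∞))` lying between the essential
liminf and limsup at `+∞`, where `g(t) = (1/log(1+t))∫₀^t μ(s) ds`. -/
theorem zeta_residue_limit_implies_dixmier_trace (μ : ℝ → ℝ)
    (hμ0 : ∀ s : ℝ, 0 ≤ s → 0 ≤ μ s) (hμ1 : ∀ s : ℝ, 0 ≤ s → μ s ≤ 1)
    (hmono : AntitoneOn μ (Set.Ici 0)) (K : ℝ) (hK : 0 < K)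
    (hint : ∀ t : ℝ, 0 < t → (∫ s in (0:ℝ)..t, μ s) ≤ K * Real.log (1 + t))
    (A : ℝ)
    (hlim : Tendsto (fun r : ℝ => (∫ s in Set.Ioi (0:ℝ), μ s ^ (1 + 1 / r)) / r)
      atTop (nhds A)) :
    ∀ ω : (ℝ → ℝ) →ₗ[ℝ] ℝ,
      -- ω is positive
      (∀ f : ℝ → ℝ, Measurable f → BddFun f →
        (∀ᵐ x ∂((volume : Measure ℝ).restrict (Set.Ioi 0)), 0 ≤ f x) → 0 ≤ ω f) →
      -- ω lies between the essential liminf and limsup at +∞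
      (∀ f : ℝ → ℝ, Measurable f → BddFun f →
        liminf f (atTop ⊓ ae ((volume : Measure ℝ).restrict (Set.Ioi 0))) ≤ ω f ∧
          ω f ≤ limsup f (atTop ⊓ ae ((volume : Measure ℝ).restrict (Set.Ioi 0)))) →
      -- ω is dilation invariant
      (∀ f : ℝ → ℝ, Measurable f → BddFun f →
        ∀ c : ℝ, 0 < c → ω (fun t => f (t / c)) = ω f) →
      ω (gFn μ) = A := by
  exact fun ω _ hω _ => zeta_residue_limit_implies_dixmier_trace_general hμ0 hmono
    (fun _ => integrableOn_rpow_of_integral_le_log hμ0 hmono hint) hlim ω hω
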